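/- arXiv:2003.07020 — 9 statements merged into one kernel-verified Lean document; each statement's English description precedes it below -/
import Mathlib

section
/- Let N_t ≥ 2 be an integer and let C be the N_t×N_t BDF2 all-at-once time-stepping matrix. Then C is invertible and the maximum absolute row-sum norm of its inverse satisfies ‖C⁻¹‖_∞ ≤ (3 N_t)/2. -/
open Matrix Finset

/-- The `N_t × N_t` BDF2 all-at-once time-stepping matrix `C`:
`C₁₁ = 1`, `C_{ii} = 3/2` for `i ≥ 2`, `C_{i,i-1} = -2`, `C_{i,i-2} = 1/2`,
all other entries zero (here written with 0-based indices). -/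
noncomputable def bdf2C (Nt : ℕ) : Matrix (Fin Nt) (Fin Nt) ℝ :=
  Matrix.of fun i j =>
    if (i : ℕ) = (j : ℕ) then (if (i : ℕ) = 0 then 1 else 3 / 2)
    else if (i : ℕ) = (j : ℕ) + 1 then -2
    else if (i : ℕ) = (j : ℕ) + 2 then 1 / 2
    else 0

/-- Explicit entries of the inverse. -/
noncomputable def bdf2d (i j : ℕ) : ℝ :=
  if j ≤ i then (if j = 0 then 3 / 2 else 1) * (1 - (1 / 3) ^ (i - j + 1)) else 0

noncomputable def bdf2c (i j : ℕ) : ℝ :=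
    if i = j then (if i = 0 then 1 else 3 / 2)
    else if i = j + 1 then -2
    else if i = j + 2 then 1 / 2
    else 0

lemma bdf2_sum (n i j : ℕ) (hi : i < n) :
    ∑ k ∈ Finset.range n, bdf2c i k * bdf2d k j = if i = j then 1 else 0 := by
  rcases i with _ | _ | m
  · have h : ∀ k ∈ Finset.range n, bdf2c 0 k * bdf2d k j = if k = 0 then bdf2d 0 j else 0 := by
      intro k _
      unfold bdf2c
      rcases k with _ | k <;> simp
    rw [Finset.sum_congr rfl h, Finset.sum_ite_eq' , if_pos (by simpa using hi)]
    unfold bdf2d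
    rcases j with _ | j <;> norm_num
  · have h : ∀ k ∈ Finset.range n, bdf2c 1 k * bdf2d k j =
        (if k = 1 then 3 / 2 * bdf2d 1 j else 0) + (if k = 0 then -2 * bdf2d 0 j else 0) := by
      intro k _
      unfold bdf2c
      rcases k with _ | _ | k <;> simp
    rw [Finset.sum_congr rfl h, Finset.sum_add_distrib, Finset.sum_ite_eq', Finset.sum_ite_eq',
      if_pos (by simpa using hi), if_pos (by simp; omega)]
    unfold bdf2d
    rcases j with _ | _ | j <;> norm_num
  · have h : ∀ k ∈ Finset.range n, bdf2c (m+2) k * bdf2d k j =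
        (if k = m + 2 then 3 / 2 * bdf2d (m+2) j else 0) +
        (if k = m + 1 then -2 * bdf2d (m+1) j else 0) +
        (if k = m then 1 / 2 * bdf2d m j else 0) := by
      intro k _
      unfold bdf2c
      by_cases h1 : k = m + 2
      · subst h1; simp
      by_cases h2 : k = m + 1
      · subst h2; simp
      by_cases h3 : k = m
      · subst h3; simp
      rw [if_neg (by omega), if_neg (by omega), if_neg (by omega)]
      simp [h1, h2, h3]
    rw [Finset.sum_congr rfl h, Finset.sum_add_distrib, Finset.sum_add_distrib,
      Finset.sum_ite_eq', Finset.sum_ite_eq', Finset.sum_ite_eq',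
      if_pos (by simpa using hi), if_pos (by simp; omega), if_pos (by simp; omega)]
    unfold bdf2d
    by_cases h1 : j ≤ m
    · obtain ⟨t, rfl⟩ := Nat.exists_eq_add_of_le h1
      rw [if_pos (show j ≤ j + t + 2 by omega), if_pos (show j ≤ j + t + 1 by omega),
        if_pos (show j ≤ j + t by omega), if_neg (show ¬ (j + t + 1 + 1 = j) by omega),
        show j + t + 2 - j + 1 = t + 3 by omega, show j + t + 1 - j + 1 = t + 2 by omega,
        show j + t - j + 1 = t + 1 by omega]
      ring
    by_cases h2 : j = m + 1
    · subst h2; simp; norm_num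
    by_cases h3 : j = m + 2
    · subst h3; simp; norm_num
    rw [if_neg (by omega), if_neg (by omega), if_neg (by omega), if_neg (by omega)]
    norm_num

lemma bdf2_mul (n : ℕ) : bdf2C n * Matrix.of (fun i j : Fin n => bdf2d i j) = 1 := by
  ext i j
  rw [Matrix.mul_apply, Matrix.one_apply]
  have := bdf2_sum n i j i.2
  rw [← Fin.sum_univ_eq_sum_range (fun k => bdf2c i k * bdf2d k j)] at this
  simp only [Fin.ext_iff]
  exact this

lemma bdf2d_abs (i j : ℕ) : |bdf2d i j| ≤ 3 / 2 := by
  have h0 : (0:ℝ) ≤ (1 / 3) ^ (i - j + 1) := by positivity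
  have h1 : ((1:ℝ) / 3) ^ (i - j + 1) ≤ 1 := pow_le_one₀ (by norm_num) (by norm_num)
  unfold bdf2d
  rw [abs_le]
  split_ifs <;> constructor <;> linarith

/-- `C` is invertible and the maximum absolute row-sum norm (the operator norm induced by
the `ℓ∞` vector norm) of `C⁻¹` is at most `3 N_t / 2`. -/
theorem stmt0 (Nt : ℕ) (hNt : 2 ≤ Nt) :
    IsUnit (bdf2C Nt) ∧
      (⨆ i : Fin Nt, ∑ j : Fin Nt, |(bdf2C Nt)⁻¹ i j|) ≤ 3 * (Nt : ℝ) / 2 := by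
  have hm := bdf2_mul Nt
  refine ⟨IsUnit.of_mul_eq_one _ hm, ?_⟩
  rw [Matrix.inv_eq_right_inv hm]
  have : Nonempty (Fin Nt) := ⟨⟨0, by omega⟩⟩
  refine ciSup_le fun i => ?_
  calc _ ≤ ∑ j : Fin Nt, (3 / 2 : ℝ) := Finset.sum_le_sum fun j _ => bdf2d_abs i j
    _ = _ := by simp; ring
end

section
/- Let N_t ≥ 2 be an integer, let C be the N_t×N_t BDF2 all-at-once time-stepping matrix, and let Ĉ = C + (1/2)·e₁e₁ᵀ (so Ĉ is the lower triangular Toeplitz matrix with diagonal 3/2, first subdiagonal -2, second subdiagonal 1/2). Then Ĉ is invertible and the vector x ∈ ℝ^{N_t} with entries x_k = 1 − 3^{−k} for k = 1, …, N_t satisfies Ĉ x = e₁; equivalently, the first column of Ĉ⁻¹ has k-th entry 1 − 3^{−k}. -/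
open Matrix Finset

/-- The first standard basis vector `e₁` of `ℝ^{N_t}`. -/
noncomputable def e1 (Nt : ℕ) : Fin Nt → ℝ := fun i => if (i : ℕ) = 0 then 1 else 0

/-- `Ĉ = C + (1/2)·e₁e₁ᵀ`, the lower triangular Toeplitz matrix with diagonal `3/2`,
first subdiagonal `-2` and second subdiagonal `1/2`. -/
noncomputable def bdf2Chat (Nt : ℕ) : Matrix (Fin Nt) (Fin Nt) ℝ :=
  bdf2C Nt + (1 / 2 : ℝ) • Matrix.vecMulVec (e1 Nt) (e1 Nt)

theorem bdf2Chat_apply (Nt : ℕ) (i j : Fin Nt) : bdf2Chat Nt i j =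
    (if (j : ℕ) = (i : ℕ) then 3 / 2 else 0) + (if (j : ℕ) + 1 = (i : ℕ) then -2 else 0)
      + (if (j : ℕ) + 2 = (i : ℕ) then 1 / 2 else 0) := by
  simp only [bdf2Chat, bdf2C, e1, Matrix.add_apply, Matrix.smul_apply, Matrix.vecMulVec_apply,
    Matrix.of_apply, smul_eq_mul]
  split_ifs <;> first | omega | norm_num

/-- `Ĉ` is invertible, and the vector `x` with `x_k = 1 − 3^{−k}` (`k = 1, …, N_t`, here
`x i = 1 − 3^{−(i+1)}` with 0-based `i`) satisfies `Ĉ x = e₁`; i.e. the first column of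
`Ĉ⁻¹` has `k`-th entry `1 − 3^{−k}`. -/
theorem stmt3 (Nt : ℕ) (hNt : 2 ≤ Nt) :
    IsUnit (bdf2Chat Nt) ∧
      (bdf2Chat Nt) *ᵥ (fun i : Fin Nt => 1 - (1 / 3 : ℝ) ^ ((i : ℕ) + 1)) = e1 Nt := by
  constructor
  · rw [Matrix.isUnit_iff_isUnit_det, Matrix.det_of_isLowerTriangular]
    · rw [isUnit_iff_ne_zero, Finset.prod_ne_zero_iff]
      intro i _
      rw [bdf2Chat_apply]
      simp
    · intro i j hij
      have h : (i : ℕ) < (j : ℕ) := hij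
      rw [bdf2Chat_apply, if_neg (by omega), if_neg (by omega), if_neg (by omega)]
      norm_num
  · funext i
    obtain ⟨i, hi⟩ := i
    simp only [Matrix.mulVec, dotProduct, bdf2Chat_apply, e1]
    rw [Fin.sum_univ_eq_sum_range (fun j : ℕ => ((if j = i then (3 / 2 : ℝ) else 0)
      + (if j + 1 = i then -2 else 0) + (if j + 2 = i then 1 / 2 else 0))
        * (1 - (1 / 3 : ℝ) ^ (j + 1))) Nt]
    simp only [add_mul, Finset.sum_add_distrib, ite_mul, zero_mul]
    match i, hi with
    | 0, hi =>
      simp [show 0 < Nt by omega]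
      norm_num
    | 1, hi =>
      simp [hi, show 0 < Nt by omega]
      norm_num
    | n + 2, hi =>
      have e : ∀ x : ℕ, (x + 1 = n + 2) = (x = n + 1) := fun x => by
        apply propext; omega
      have e' : ∀ x : ℕ, (x + 2 = n + 2) = (x = n) := fun x => by
        apply propext; omega
      simp only [e']
      simp only [e, Finset.sum_ite_eq', Finset.mem_range, hi, show n + 1 < Nt by omega,
        show n < Nt by omega, if_true]
      rw [if_neg (by omega)]
      ring
end

section
/- Let N_t ≥ 2 be an integer, let C be the N_t×N_t BDF2 all-at-once time-stepping matrix, let Ĉ = C + (1/2)·e₁e₁ᵀ, and let x ∈ ℝ^{N_t} be the vector with entries x_k = 1 − 3^{−k}. Then C⁻¹ = Ĉ⁻¹ + (1/2)·x e₁ᵀ. -/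
open Matrix Finset

theorem bdf2_vecMul (Nt : ℕ) (hNt : 2 ≤ Nt) : e1 Nt ᵥ* bdf2C Nt = e1 Nt := by
  funext j
  simp only [Matrix.vecMul, dotProduct]
  rw [Finset.sum_eq_single (⟨0, by omega⟩ : Fin Nt)]
  · simp only [e1, bdf2C, Matrix.of_apply]
    by_cases h : (j : ℕ) = 0
    · simp [h]
    · simp [h, Ne.symm h]
  · intro b _ hb
    have : (b : ℕ) ≠ 0 := fun h => hb (Fin.ext h)
    simp [e1, this]
  · simp

theorem bdf2_entry (Nt : ℕ) (i j : Fin Nt) : bdf2Chat Nt i j =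
    (if (j : ℕ) = i then (3 / 2 : ℝ) else 0) + (if (j : ℕ) + 1 = i then (-2 : ℝ) else 0)
      + (if (j : ℕ) + 2 = i then (1 / 2 : ℝ) else 0) := by
  simp only [bdf2Chat, bdf2C, e1, Matrix.add_apply, Matrix.smul_apply, Matrix.vecMulVec_apply,
    Matrix.of_apply, smul_eq_mul]
  split_ifs <;> first | omega | norm_num

theorem bdf2_mulVec (Nt : ℕ) :
    bdf2Chat Nt *ᵥ (fun i : Fin Nt => 1 - (1 / 3 : ℝ) ^ ((i : ℕ) + 1)) = e1 Nt := by
  funext i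
  simp only [Matrix.mulVec, dotProduct, bdf2_entry]
  rw [Fin.sum_univ_eq_sum_range (fun j => ((if j = (i : ℕ) then (3 / 2 : ℝ) else 0)
    + (if j + 1 = (i : ℕ) then (-2 : ℝ) else 0)
    + (if j + 2 = (i : ℕ) then (1 / 2 : ℝ) else 0)) * (1 - (1 / 3 : ℝ) ^ (j + 1))) Nt]
  simp only [add_mul, Finset.sum_add_distrib, ite_mul, zero_mul, e1]
  obtain ⟨k, hk⟩ := i
  simp only
  rcases k with _ | _ | k
  · simp [hk]; norm_num
  · have : 0 < Nt := by omega
    simp [hk, this]; norm_num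
  · have h1 : k + 1 < Nt := by omega
    have h2 : k < Nt := by omega
    simp [hk, h1, h2]
    ring

theorem bdf2_det (Nt : ℕ) : IsUnit (bdf2Chat Nt).det := by
  rw [Matrix.det_of_lowerTriangular]
  · simp [bdf2_entry]
  · intro i j hij
    have : (i : ℕ) < j := hij
    rw [bdf2_entry, if_neg (by omega), if_neg (by omega), if_neg (by omega)]
    simp

/-- With `x_k = 1 − 3^{−k}` (0-based: `x i = 1 − 3^{−(i+1)}`), one has
`C⁻¹ = Ĉ⁻¹ + (1/2)·x e₁ᵀ`. -/
theorem stmt4 (Nt : ℕ) (hNt : 2 ≤ Nt) :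
    (bdf2C Nt)⁻¹ =
      (bdf2Chat Nt)⁻¹ +
        (1 / 2 : ℝ) •
          Matrix.vecMulVec (fun i : Fin Nt => 1 - (1 / 3 : ℝ) ^ ((i : ℕ) + 1)) (e1 Nt) := by
  apply Matrix.inv_eq_left_inv
  have hd := bdf2_det Nt
  have hx : (fun i : Fin Nt => 1 - (1 / 3 : ℝ) ^ ((i : ℕ) + 1)) = (bdf2Chat Nt)⁻¹ *ᵥ e1 Nt := by
    rw [← bdf2_mulVec, Matrix.mulVec_mulVec, Matrix.nonsing_inv_mul _ hd, Matrix.one_mulVec]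
  rw [add_mul, Matrix.smul_mul, Matrix.vecMulVec_mul, bdf2_vecMul Nt hNt, hx,
    ← Matrix.mul_vecMulVec, ← Matrix.mul_smul, ← mul_add]
  exact Matrix.nonsing_inv_mul _ hd
end

section
/- Let N_t ≥ 2 be an integer and let C be the N_t×N_t BDF2 all-at-once time-stepping matrix. Then ‖C⁻¹‖₂ ≤ N_t·√(3/2); equivalently, the smallest singular value of C satisfies σ_min(C) ≥ √6/(3 N_t), i.e., ‖C z‖₂ ≥ (√6/(3 N_t))·‖z‖₂ for every z ∈ ℝ^{N_t}. -/
open Matrix Finset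

/-- The Euclidean (`ℓ²`) norm of a vector. -/
noncomputable def l2norm {n : Type*} [Fintype n] (x : n → ℝ) : ℝ :=
  Real.sqrt (∑ i, x i ^ 2)

/-- The spectral norm (largest singular value) of a square real matrix. -/
noncomputable def specNorm {n : Type*} [Fintype n] (M : Matrix n n ℝ) : ℝ :=
  sSup {c | ∃ x : n → ℝ, l2norm x = 1 ∧ c = l2norm (M *ᵥ x)}

noncomputable def auxY (Z : ℕ → ℝ) : ℕ → ℝ
  | 0 => Z 0
  | 1 => 3 / 2 * Z 1 - 2 * Z 0
  | (k+2) => 3 / 2 * Z (k+2) - 2 * Z (k+1) + 1 / 2 * Z k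

noncomputable def auxW (Z : ℕ → ℝ) : ℕ → ℝ
  | 0 => 3 / 2 * Z 0
  | (k+1) => 3 / 2 * Z (k+1) - 1 / 2 * Z k

lemma auxW_succ (Z : ℕ → ℝ) (k : ℕ) : auxW Z (k+1) = auxW Z k + auxY Z (k+1) := by
  cases k with
  | zero => simp only [auxW, auxY]; ring
  | succ k => simp only [auxW, auxY]; ring

lemma aux_cs (w y A S : ℝ) (hA : 0 ≤ A) (hS : 0 ≤ S) (h : w ^ 2 ≤ A * S) :
    (w + y) ^ 2 ≤ (A + 1) * (S + y ^ 2) := by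
  have h1 : 2 * w * y ≤ S + A * y ^ 2 := by
    refine (abs_le_of_sq_le_sq' ?_ (by positivity)).2
    nlinarith [sq_nonneg (S - A * y ^ 2), mul_le_mul_of_nonneg_right h (sq_nonneg y)]
  nlinarith

lemma aux_bound (Z : ℕ → ℝ) (k : ℕ) :
    auxW Z k ^ 2 ≤ ((k : ℝ) + 9 / 4) * ∑ j ∈ range (k+1), auxY Z j ^ 2 ∧
    Z k ^ 2 ≤ ((k : ℝ) + 9 / 4) * ∑ j ∈ range (k+1), auxY Z j ^ 2 := by
  induction k with
  | zero =>
    simp only [auxW, auxY, zero_add, sum_range_one, Nat.cast_zero]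
    constructor <;> nlinarith [sq_nonneg (Z 0)]
  | succ k ih =>
    obtain ⟨h1, h2⟩ := ih
    rw [sum_range_succ]
    have hS : 0 ≤ ∑ j ∈ range (k+1), auxY Z j ^ 2 := sum_nonneg fun _ _ => sq_nonneg _
    set S := ∑ j ∈ range (k+1), auxY Z j ^ 2
    have hk : (0:ℝ) ≤ k := Nat.cast_nonneg k
    have hw := aux_cs _ (auxY Z (k+1)) _ S (by positivity) hS h1
    rw [← auxW_succ] at hw
    push_cast
    have e : (k : ℝ) + 1 + 9 / 4 = (k : ℝ) + 9 / 4 + 1 := by ring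
    rw [e]
    refine ⟨hw, ?_⟩
    have hm : ((k : ℝ) + 9 / 4) * S ≤ ((k : ℝ) + 9 / 4 + 1) * (S + auxY Z (k+1) ^ 2) := by
      apply mul_le_mul <;> nlinarith [sq_nonneg (auxY Z (k+1))]
    have hz : Z (k+1) = 2 / 3 * auxW Z (k+1) + 1 / 3 * Z k := by
      simp only [auxW]; ring
    have hc : Z (k+1) ^ 2 ≤ 2 / 3 * auxW Z (k+1) ^ 2 + 1 / 3 * Z k ^ 2 := by
      rw [hz]; nlinarith [sq_nonneg (auxW Z (k+1) - Z k)]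
    linarith

lemma aux_sum (n : ℕ) : ∑ k ∈ range n, ((k : ℝ) + 9 / 4) = n ^ 2 / 2 + 7 / 4 * n := by
  induction n with
  | zero => simp
  | succ n ih => rw [sum_range_succ, ih]; push_cast; ring

lemma aux_main (Z : ℕ → ℝ) (n : ℕ) (hn : 2 ≤ n) :
    ∑ k ∈ range n, Z k ^ 2 ≤ 3 / 2 * (n : ℝ) ^ 2 * ∑ k ∈ range n, auxY Z k ^ 2 := by
  have hS : 0 ≤ ∑ k ∈ range n, auxY Z k ^ 2 := sum_nonneg fun _ _ => sq_nonneg _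
  calc ∑ k ∈ range n, Z k ^ 2
      ≤ ∑ k ∈ range n, ((k : ℝ) + 9 / 4) * ∑ k ∈ range n, auxY Z k ^ 2 := by
        apply sum_le_sum
        intro k hk
        refine (aux_bound Z k).2.trans ?_
        apply mul_le_mul_of_nonneg_left _ (by positivity)
        apply sum_le_sum_of_subset_of_nonneg
        · intro j hj
          simp only [Finset.mem_range] at *
          omega
        · intros; positivity
    _ = (n ^ 2 / 2 + 7 / 4 * n) * ∑ k ∈ range n, auxY Z k ^ 2 := by
        rw [← sum_mul, aux_sum]
    _ ≤ _ := by
        apply mul_le_mul_of_nonneg_right _ hS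
        have : (2:ℝ) ≤ n := by exact_mod_cast hn
        nlinarith

def auxZ {n : ℕ} (z : Fin n → ℝ) (k : ℕ) : ℝ := if h : k < n then z ⟨k, h⟩ else 0

lemma auxZ_val {n : ℕ} (z : Fin n → ℝ) (i : Fin n) : auxZ z i = z i := by
  simp [auxZ]

lemma aux_mulVec {n : ℕ} (z : Fin n → ℝ) (i : Fin n) :
    (bdf2C n *ᵥ z) i = auxY (auxZ z) i := by
  have h1 : (bdf2C n *ᵥ z) i = ∑ j ∈ range n,
      ((if j = (i:ℕ) then (if (i : ℕ) = 0 then 1 else 3 / 2) * auxZ z j else 0)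
      + (if j + 1 = (i:ℕ) then -2 * auxZ z j else 0)
      + (if j + 2 = (i:ℕ) then 1 / 2 * auxZ z j else 0)) := by
    rw [← Fin.sum_univ_eq_sum_range (fun j => 
      ((if j = (i:ℕ) then (if (i : ℕ) = 0 then 1 else 3 / 2) * auxZ z j else 0)
      + (if j + 1 = (i:ℕ) then -2 * auxZ z j else 0)
      + (if j + 2 = (i:ℕ) then 1 / 2 * auxZ z j else 0)))]
    simp only [mulVec, dotProduct, bdf2C, of_apply]
    refine sum_congr rfl fun j _ => ?_
    rw [auxZ_val]
    split_ifs <;> first | omega | simp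
  rw [h1]
  obtain ⟨i, hi⟩ := i
  simp only [sum_add_distrib]
  match i, hi with
  | 0, hi => simp [auxY, hi]; 
  | 1, hi =>
    have : 0 < n := by omega
    simp [auxY, hi, this]; ring
  | k+2, hi => 
    have h1 : k + 1 < n := by omega
    have h2 : k < n := by omega
    have e : ∀ j, j + 2 = k + 2 ↔ j = k := by omega
    have e' : ∀ j, j + 1 = k + 2 ↔ j = k + 1 := by omega
    simp only [e, e', Finset.sum_ite_eq', Finset.mem_range, hi, h1, h2, auxY, if_true]
    simp; ring

lemma aux_vec (n : ℕ) (hn : 2 ≤ n) (z : Fin n → ℝ) :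
    l2norm z ≤ (n : ℝ) * Real.sqrt (3 / 2) * l2norm (bdf2C n *ᵥ z) := by
  have h := aux_main (auxZ z) n hn
  rw [← Fin.sum_univ_eq_sum_range (fun k => auxZ z k ^ 2),
    ← Fin.sum_univ_eq_sum_range (fun k => auxY (auxZ z) k ^ 2)] at h
  simp only [auxZ_val, ← aux_mulVec] at h
  unfold l2norm
  apply Real.sqrt_le_iff.2
  refine ⟨by positivity, ?_⟩
  rw [mul_pow, mul_pow, Real.sq_sqrt (by norm_num), Real.sq_sqrt (sum_nonneg fun _ _ => sq_nonneg _)]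
  linarith

lemma aux_inj (n : ℕ) (hn : 2 ≤ n) : IsUnit (bdf2C n) := by
  rw [← Matrix.mulVec_injective_iff_isUnit]
  intro a b hab
  have h := aux_vec n hn (a - b)
  have h0 : bdf2C n *ᵥ (a - b) = 0 := by
    rw [mulVec_sub]; exact sub_eq_zero.2 hab
  rw [h0] at h
  have h1 : l2norm (0 : Fin n → ℝ) = 0 := by simp [l2norm]
  rw [h1, mul_zero] at h
  unfold l2norm at h
  have h2 := Real.sqrt_eq_zero'.1 (le_antisymm h (Real.sqrt_nonneg _))
  have h3 := (sum_eq_zero_iff_of_nonneg (fun i _ => sq_nonneg _)).1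
    (le_antisymm h2 (sum_nonneg fun i _ => sq_nonneg ((a - b) i)))
  funext i
  have := h3 i (mem_univ i)
  exact sub_eq_zero.1 (pow_eq_zero_iff (two_ne_zero)|>.1 this)

/-- `‖C⁻¹‖₂ ≤ N_t √(3/2)`; equivalently, the smallest singular value of `C` satisfies
`σ_min(C) ≥ √6/(3 N_t)`, i.e. `‖C z‖₂ ≥ (√6/(3 N_t)) ‖z‖₂` for every `z`. -/
theorem stmt7 (Nt : ℕ) (hNt : 2 ≤ Nt) :
    specNorm ((bdf2C Nt)⁻¹) ≤ (Nt : ℝ) * Real.sqrt (3 / 2) ∧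
      ∀ z : Fin Nt → ℝ,
        (Real.sqrt 6 / (3 * (Nt : ℝ))) * l2norm z ≤ l2norm (bdf2C Nt *ᵥ z) := by
  constructor
  · apply Real.sSup_le _ (by positivity)
    rintro c ⟨x, hx, rfl⟩
    have h := aux_vec Nt hNt ((bdf2C Nt)⁻¹ *ᵥ x)
    rw [mulVec_mulVec, mul_nonsing_inv _ ((isUnit_iff_isUnit_det _).1 (aux_inj Nt hNt)),
      one_mulVec, hx, mul_one] at h
    exact h
  · intro z
    have h := aux_vec Nt hNt z
    have hn : (0:ℝ) < Nt := by
      have : 0 < Nt := by omega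
      exact_mod_cast this
    have h6 : Real.sqrt 6 * Real.sqrt (3 / 2) = 3 := by
      rw [← Real.sqrt_mul (by norm_num), show (6:ℝ) * (3 / 2) = 3 ^ 2 by norm_num]
      exact Real.sqrt_sq (by norm_num)
    calc _ ≤ (Real.sqrt 6 / (3 * (Nt : ℝ))) *
          ((Nt : ℝ) * Real.sqrt (3 / 2) * l2norm (bdf2C Nt *ᵥ z)) := by gcongr
      _ = (Real.sqrt 6 * Real.sqrt (3 / 2)) / 3 * l2norm (bdf2C Nt *ᵥ z) := by
          field_simp
      _ = _ := by rw [h6]; ring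
end

section
/- Let N_t ≥ 3 and N_s ≥ 1 be integers, let C be the N_t×N_t BDF2 all-at-once time-stepping matrix, let A be a real symmetric negative semidefinite N_s×N_s matrix, let τ > 0, set T = N_t·τ, and set 𝒜 = C ⊗ I_{N_s} − τ·(I_{N_t} ⊗ A). Then the singular values of 𝒜 satisfy σ_max(𝒜) ≤ 4 + τ‖A‖₂ and σ_min(𝒜) ≥ √6/(3 N_t), and consequently the spectral condition number satisfies cond₂(𝒜) = σ_max(𝒜)/σ_min(𝒜) ≤ 2√6·N_t + (√6/2)·T·‖A‖₂. -/
open Matrix Finset Kronecker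

/-- The largest singular value (spectral norm) of a square real matrix. -/
noncomputable def sigmaMax {n : Type*} [Fintype n] (M : Matrix n n ℝ) : ℝ :=
  sSup {c | ∃ x : n → ℝ, l2norm x = 1 ∧ c = l2norm (M *ᵥ x)}

/-- The smallest singular value of a square real matrix. -/
noncomputable def sigmaMin {n : Type*} [Fintype n] (M : Matrix n n ℝ) : ℝ :=
  sInf {c | ∃ x : n → ℝ, l2norm x = 1 ∧ c = l2norm (M *ᵥ x)}

noncomputable def TT (v : ℕ → ℝ) (k : ℕ) : ℝ := 3 / 2 * v (k + 2) - 2 * v (k + 1) + 1 / 2 * v k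

noncomputable def sh {N : ℕ} (x : Fin N → ℝ) (n : ℕ) : ℝ :=
  if h : 2 ≤ n ∧ n - 2 < N then x ⟨n - 2, h.2⟩ else 0

lemma sh_zero {N : ℕ} (x : Fin N → ℝ) : sh x 0 = 0 := by simp [sh]
lemma sh_one {N : ℕ} (x : Fin N → ℝ) : sh x 1 = 0 := by simp [sh]
lemma sh_add {N : ℕ} (x : Fin N → ℝ) (k : Fin N) : sh x (k + 2) = x k := by simp [sh]

lemma T_pos (v : ℕ → ℝ) (h0 : v 0 = 0) (h1 : v 1 = 0) (N : ℕ) :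
    0 ≤ ∑ k : Fin N, TT v k * v (k + 2) := by
  rw [Fin.sum_univ_eq_sum_range (fun k => TT v k * v (k + 2)) N]
  have : (v (N + 1) ^ 2 + (2 * v (N + 1) - v N) ^ 2) / 4
      ≤ ∑ k ∈ range N, TT v k * v (k + 2) := by
    induction N with
    | zero => simp [h0, h1]
    | succ n ih =>
      rw [Finset.sum_range_succ]
      unfold TT at *
      nlinarith [sq_nonneg (v (n + 2) - 2 * v (n + 1) + v n)]
  refine le_trans (by positivity) this

lemma T_inv (v : ℕ → ℝ) (h0 : v 0 = 0) (h1 : v 1 = 0) (N : ℕ) :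
    ∑ k : Fin N, v (k + 2) ^ 2 ≤ (N * (N + 1) / 2 : ℝ) * ∑ k : Fin N, TT v k ^ 2 := by
  rw [Fin.sum_univ_eq_sum_range (fun k => v (k + 2) ^ 2) N,
    Fin.sum_univ_eq_sum_range (fun k => TT v k ^ 2) N]
  have hS : ∀ n, ∑ k ∈ range n, TT v k = 3 / 2 * v (n + 1) - 1 / 2 * v n := by
    intro n
    induction n with
    | zero => simp [h0, h1]
    | succ n ih => rw [Finset.sum_range_succ, ih]; unfold TT; ring
  have hb : ∀ n, |v (n + 1)| ≤ ∑ k ∈ range n, |TT v k| := by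
    intro n
    induction n with
    | zero => simp [h1]
    | succ n ih =>
      have h2 := hS (n + 1)
      have h3 := Finset.abs_sum_le_sum_abs (fun k => TT v k) (range (n + 1))
      rw [h2] at h3
      have h4 : ∑ k ∈ range n, |TT v k| ≤ ∑ k ∈ range (n + 1), |TT v k| := by
        rw [Finset.sum_range_succ]; linarith [abs_nonneg (TT v n)]
      have h5 := abs_le.1 h3
      have h6 := abs_le.1 ih
      rw [abs_le]
      constructor <;> linarith [h5.1, h5.2, h6.1, h6.2]
  have hq : ∀ n, v (n + 2) ^ 2 ≤ ((n : ℝ) + 1) * ∑ k ∈ range (n + 1), TT v k ^ 2 := by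
    intro n
    have h2 := sq_sum_le_card_mul_sum_sq (s := range (n + 1)) (f := fun k => |TT v k|)
    simp only [sq_abs, card_range] at h2
    push_cast at h2
    refine le_trans ?_ h2
    rw [← sq_abs (v (n + 2))]
    exact pow_le_pow_left₀ (abs_nonneg _) (hb (n + 1)) 2
  have hg : ∑ k ∈ range N, ((k : ℝ) + 1) = N * (N + 1) / 2 := by
    clear hS hb hq
    induction N with
    | zero => simp
    | succ n ih => rw [Finset.sum_range_succ, ih]; push_cast; ring
  rw [← hg, Finset.sum_mul]
  refine Finset.sum_le_sum fun n hn => (hq n).trans ?_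
  refine mul_le_mul_of_nonneg_left ?_ (by positivity)
  refine Finset.sum_le_sum_of_subset_of_nonneg ?_ fun _ _ _ => sq_nonneg _
  intro k hk
  simp only [Finset.mem_range] at *
  omega

lemma C_row {N : ℕ} (x : Fin N → ℝ) (k : Fin N) :
    ∑ j, bdf2C N k j * x j = if (k : ℕ) = 0 then sh x 2 else TT (sh x) k := by
  have : ∀ j : Fin N, bdf2C N k j * x j =
    (fun j : ℕ => (if (k : ℕ) = j then (if (k : ℕ) = 0 then 1 else 3 / 2) * sh x (j + 2) else 0)
      + (if (k : ℕ) = j + 1 then -2 * sh x (j + 2) else 0)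
      + (if (k : ℕ) = j + 2 then 1 / 2 * sh x (j + 2) else 0)) (j : ℕ) := by
    intro j
    simp only [bdf2C, Matrix.of_apply, sh_add]
    split_ifs <;> first | omega | simp
  rw [Finset.sum_congr rfl fun j _ => this j, Fin.sum_univ_eq_sum_range (fun j : ℕ => (if (k : ℕ) = j then (if (k : ℕ) = 0 then 1 else 3 / 2) * sh x (j + 2) else 0)
      + (if (k : ℕ) = j + 1 then -2 * sh x (j + 2) else 0)
      + (if (k : ℕ) = j + 2 then 1 / 2 * sh x (j + 2) else 0)) N]
  rcases k with ⟨k, hk⟩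
  simp only [Finset.sum_add_distrib]
  rcases k with _ | _ | k
  · simp [hk]
  · have h2 : 0 < N := by omega
    simp [hk, h2, TT, sh_one]; ring
  · have h2 : k < N := by omega
    have h3 : k + 1 < N := by omega
    simp [hk, h2, h3, TT]; ring

lemma C_bd {N : ℕ} (x : Fin N → ℝ) :
    ∑ k, (∑ j, bdf2C N k j * x j) ^ 2 ≤ 16 * ∑ k, x k ^ 2 := by
  have h1 : ∀ k : Fin N, (∑ j, bdf2C N k j * x j) ^ 2 ≤
      (fun k : ℕ => 4 * (3 / 2 * sh x (k + 2) ^ 2 + 2 * sh x (k + 1) ^ 2 + 1 / 2 * sh x k ^ 2)) k := by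
    intro k
    rw [C_row]
    split_ifs with h
    · simp only [h, sh_zero, zero_add, sh_one]; nlinarith [sq_nonneg (sh x 2)]
    · simp only [TT]
      generalize sh x (k + 2) = a
      generalize sh x (k + 1) = b
      generalize sh x k = c
      nlinarith [sq_nonneg (a + b), sq_nonneg (a - c), sq_nonneg (b + c)]
  refine (Finset.sum_le_sum fun k _ => h1 k).trans ?_
  have h2 : ∑ k, x k ^ 2 = ∑ k : Fin N, (fun k : ℕ => sh x (k + 2) ^ 2) k := by
    simp [sh_add]
  rw [h2, Fin.sum_univ_eq_sum_range (fun k : ℕ => sh x (k + 2) ^ 2) N, Fin.sum_univ_eq_sum_range (fun k : ℕ => 4 * (3 / 2 * sh x (k + 2) ^ 2 + 2 * sh x (k + 1) ^ 2 + 1 / 2 * sh x k ^ 2)) N]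
  have h3 : ∀ n, ∑ k ∈ range n, sh x (k + 1) ^ 2 ≤ ∑ k ∈ range n, sh x (k + 2) ^ 2 := by
    intro n
    have : ∑ k ∈ range n, sh x (k + 1) ^ 2 + sh x (n + 1) ^ 2 = ∑ k ∈ range n, sh x (k + 2) ^ 2 := by
      induction n with
      | zero => simp [sh_one]
      | succ n ih => rw [Finset.sum_range_succ, Finset.sum_range_succ, ← ih]
    linarith [sq_nonneg (sh x (n + 1))]
  have h4 : ∀ n, ∑ k ∈ range n, sh x k ^ 2 ≤ ∑ k ∈ range n, sh x (k + 1) ^ 2 := by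
    intro n
    have : ∑ k ∈ range n, sh x k ^ 2 + sh x n ^ 2 = ∑ k ∈ range n, sh x (k + 1) ^ 2 := by
      induction n with
      | zero => simp [sh_zero]
      | succ n ih => rw [Finset.sum_range_succ, Finset.sum_range_succ, ← ih]
    linarith [sq_nonneg (sh x n)]
  rw [← Finset.mul_sum, Finset.sum_add_distrib, Finset.sum_add_distrib, ← Finset.mul_sum,
    ← Finset.mul_sum, ← Finset.mul_sum]
  linarith [h3 N, h4 N]

lemma l2_sq {n : Type*} [Fintype n] (x : n → ℝ) : l2norm x ^ 2 = ∑ i, x i ^ 2 :=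
  Real.sq_sqrt (Finset.sum_nonneg fun _ _ => sq_nonneg _)

lemma l2_nonneg {n : Type*} [Fintype n] (x : n → ℝ) : 0 ≤ l2norm x := Real.sqrt_nonneg _

lemma l2_eq {n : Type*} [Fintype n] (x : n → ℝ) : l2norm x = ‖WithLp.toLp 2 x‖ := by
  simp [l2norm, EuclideanSpace.norm_eq]

lemma l2_sub {n : Type*} [Fintype n] (x y : n → ℝ) : l2norm (x - y) ≤ l2norm x + l2norm y := by
  simp only [l2_eq, WithLp.toLp_sub]
  exact norm_sub_le _ _

lemma l2_smul {n : Type*} [Fintype n] (c : ℝ) (x : n → ℝ) : l2norm (c • x) = |c| * l2norm x := by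
  simp only [l2_eq, WithLp.toLp_smul, norm_smul, Real.norm_eq_abs]

lemma sMax_bdd {n : Type*} [Fintype n] (M : Matrix n n ℝ) :
    BddAbove {c | ∃ x : n → ℝ, l2norm x = 1 ∧ c = l2norm (M *ᵥ x)} := by
  refine ⟨Real.sqrt (∑ i, ∑ j, M i j ^ 2), ?_⟩
  rintro c ⟨x, hx, rfl⟩
  refine Real.sqrt_le_sqrt (Finset.sum_le_sum fun i _ => ?_)
  have := Finset.sum_mul_sq_le_sq_mul_sq Finset.univ (fun j => M i j) x
  rw [← l2_sq x, hx] at this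
  simpa [Matrix.mulVec, dotProduct] using this

lemma sMax_le {n : Type*} [Fintype n] (M : Matrix n n ℝ) (x : n → ℝ) :
    l2norm (M *ᵥ x) ≤ sigmaMax M * l2norm x := by
  rcases (l2_nonneg x).eq_or_lt with h | h
  · have hx : x = 0 := by
      rw [l2_eq] at h
      have := norm_eq_zero.1 h.symm
      simpa using this
    subst hx
    simp [l2norm]
  · have h1 : l2norm (M *ᵥ ((l2norm x)⁻¹ • x)) ≤ sigmaMax M := by
      refine le_csSup (sMax_bdd M) ⟨_, ?_, rfl⟩
      rw [l2_smul, abs_of_pos (inv_pos.2 h)]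
      field_simp
    rw [Matrix.mulVec_smul, l2_smul, abs_of_pos (inv_pos.2 h)] at h1
    rw [inv_mul_le_iff₀ h] at h1
    linarith

lemma sMax_nonneg {n : Type*} [Fintype n] (M : Matrix n n ℝ) : 0 ≤ sigmaMax M := by
  refine Real.sSup_nonneg ?_
  rintro c ⟨x, hx, rfl⟩
  exact l2_nonneg _

lemma K1 {N n : ℕ} (C : Matrix (Fin N) (Fin N) ℝ) (x : Fin N × Fin n → ℝ) (k : Fin N) (j : Fin n) :
    ((C ⊗ₖ (1 : Matrix (Fin n) (Fin n) ℝ)) *ᵥ x) (k, j) = ∑ l, C k l * x (l, j) := by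
  simp [Matrix.mulVec, dotProduct, Fintype.sum_prod_type, Matrix.kroneckerMap_apply,
    Matrix.one_apply]

lemma K2 {N n : ℕ} (A : Matrix (Fin n) (Fin n) ℝ) (x : Fin N × Fin n → ℝ) (k : Fin N) (j : Fin n) :
    (((1 : Matrix (Fin N) (Fin N) ℝ) ⊗ₖ A) *ᵥ x) (k, j) = (A *ᵥ (fun i => x (k, i))) j := by
  simp only [Matrix.mulVec, dotProduct, Fintype.sum_prod_type, Matrix.kroneckerMap_apply,
    Matrix.one_apply]
  rw [Finset.sum_eq_single k]
  · simp
  · intro b _ hb; simp [hb.symm]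
  · simp

lemma up_bd {N n : ℕ} (A : Matrix (Fin n) (Fin n) ℝ) (τ : ℝ) (hτ : 0 < τ) (x : Fin N × Fin n → ℝ) :
    l2norm ((bdf2C N ⊗ₖ (1 : Matrix (Fin n) (Fin n) ℝ) -
        τ • ((1 : Matrix (Fin N) (Fin N) ℝ) ⊗ₖ A)) *ᵥ x) ≤ (4 + τ * sigmaMax A) * l2norm x := by
  rw [Matrix.sub_mulVec, Matrix.smul_mulVec]
  refine (l2_sub _ _).trans ?_
  rw [l2_smul, abs_of_pos hτ, add_mul, mul_assoc]
  refine add_le_add ?_ (mul_le_mul_of_nonneg_left ?_ hτ.le)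
  · refine abs_le_of_sq_le_sq' ?_ (mul_nonneg (by norm_num) (l2_nonneg x)) |>.2
    rw [mul_pow, l2_sq, l2_sq, Fintype.sum_prod_type_right, Fintype.sum_prod_type_right,
      Finset.mul_sum]
    refine Finset.sum_le_sum fun j _ => ?_
    simp only [K1]
    have := C_bd (fun k => x (k, j))
    norm_num
    exact this
  · refine abs_le_of_sq_le_sq' ?_ (mul_nonneg (sMax_nonneg A) (l2_nonneg x)) |>.2
    rw [mul_pow, l2_sq, l2_sq, Fintype.sum_prod_type, Fintype.sum_prod_type, Finset.mul_sum]
    refine Finset.sum_le_sum fun k _ => ?_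
    simp only [K2]
    rw [← l2_sq (A *ᵥ fun i => x (k, i)), ← l2_sq (fun i => x (k, i)), ← mul_pow]
    exact pow_le_pow_left₀ (l2_nonneg _) (sMax_le _ _) 2

lemma TT_lin {n : ℕ} (b : Fin n → ℝ) (V : Fin n → ℕ → ℝ) (k : ℕ) :
    ∑ j, b j * TT (V j) k = TT (fun m => ∑ j, b j * V j m) k := by
  simp only [TT, Finset.mul_sum, ← Finset.sum_add_distrib, ← Finset.sum_sub_distrib]
  exact Finset.sum_congr rfl fun j _ => by ring

open scoped MatrixOrder Matrix.Norms.L2Operator in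
lemma low_bd {N n : ℕ} (hN : 3 ≤ N) (A : Matrix (Fin n) (Fin n) ℝ) (hs : A.IsSymm)
    (hA : ∀ z : Fin n → ℝ, z ⬝ᵥ (A *ᵥ z) ≤ 0) (τ : ℝ) (hτ : 0 < τ) (x : Fin N × Fin n → ℝ) :
    2 * l2norm x ^ 2 ≤ 3 * (N : ℝ) ^ 2 * l2norm ((bdf2C N ⊗ₖ (1 : Matrix (Fin n) (Fin n) ℝ) -
        τ • ((1 : Matrix (Fin N) (Fin N) ℝ) ⊗ₖ A)) *ᵥ x) ^ 2 := by
  obtain ⟨B, hB⟩ : ∃ B : Matrix (Fin n) (Fin n) ℝ, -A = Bᵀ * B := by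
    have hp : (-A).PosSemidef := by
      refine Matrix.PosSemidef.of_dotProduct_mulVec_nonneg ?_ ?_
      · have : A.IsHermitian := by simpa [Matrix.IsHermitian, Matrix.IsSymm] using hs
        exact this.neg
      · intro z
        have := hA z
        simp [Matrix.neg_mulVec]
        exact this
    obtain ⟨B, hB⟩ := CStarAlgebra.nonneg_iff_eq_star_mul_self.mp hp.nonneg
    exact ⟨B, by simpa [Matrix.star_eq_conjTranspose] using hB⟩
  set y := (bdf2C N ⊗ₖ (1 : Matrix (Fin n) (Fin n) ℝ) -
        τ • ((1 : Matrix (Fin N) (Fin N) ℝ) ⊗ₖ A)) *ᵥ x with hy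
  set V : Fin n → ℕ → ℝ := fun j => sh (fun k => x (k, j)) with hV
  set d : Fin N → ℝ := fun k => if (k : ℕ) = 0 then 3 / 2 else 1 with hd
  set U : Fin n → ℕ → ℝ := fun i m => ∑ j, B i j * V j m with hU
  set Q : Fin N → Fin n → ℝ := fun k => (-A) *ᵥ (fun i => x (k, i)) with hQ
  have hyk : ∀ k j, d k * y (k, j) = TT (V j) k + d k * τ * Q k j := by
    intro k j
    have e : y (k, j) = (∑ l, bdf2C N k l * x (l, j)) + τ * Q k j := by
      rw [hy, Matrix.sub_mulVec, Matrix.smul_mulVec]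
      simp only [Pi.sub_apply, Pi.smul_apply, K1, K2, smul_eq_mul, hQ, Matrix.neg_mulVec,
        Pi.neg_apply]
      ring
    rw [e, C_row (fun l => x (l, j)) k]
    simp only [hd]
    split_ifs with h
    · simp only [h, TT, hV, sh_zero, zero_add, sh_one]; ring
    · ring
  have hWQ : ∀ k : Fin N, ∑ j, TT (V j) k * Q k j = ∑ i, TT (U i) k * U i (k + 2) := by
    intro k
    have : ∑ j, TT (V j) k * Q k j = (fun j => TT (V j) k) ⬝ᵥ ((-A) *ᵥ (fun i => x (k, i))) := rfl
    rw [this, hB, ← Matrix.mulVec_mulVec, Matrix.dotProduct_mulVec, Matrix.vecMul_transpose]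
    refine Finset.sum_congr rfl fun i _ => ?_
    simp only [Matrix.mulVec, dotProduct, hU]
    rw [TT_lin]
    simp [hV, sh_add]
  have hU0 : ∀ i, U i 0 = 0 := fun i => by simp [hU, hV, sh_zero]
  have hU1 : ∀ i, U i 1 = 0 := fun i => by simp [hU, hV, sh_one]
  have hpos : 0 ≤ ∑ k : Fin N, ∑ j, TT (V j) k * (d k * τ * Q k j) := by
    have e1 : ∀ k : Fin N, ∑ j, TT (V j) k * Q k j ≤ d k * ∑ j, TT (V j) k * Q k j := by
      intro k
      simp only [hd]
      split_ifs with h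
      · have : 0 ≤ ∑ j, TT (V j) k * Q k j := by
          rw [hWQ]
          refine Finset.sum_nonneg fun i _ => ?_
          simp only [h, TT, hU0, hU1]
          nlinarith [sq_nonneg (U i (0 + 2))]
        linarith
      · simp
    have e2 : 0 ≤ ∑ k : Fin N, ∑ j, TT (V j) k * Q k j := by
      simp only [hWQ]
      rw [Finset.sum_comm]
      exact Finset.sum_nonneg fun i _ => T_pos (U i) (hU0 i) (hU1 i) N
    have e3 : ∑ k : Fin N, ∑ j, TT (V j) k * (d k * τ * Q k j)
        = τ * ∑ k : Fin N, d k * ∑ j, TT (V j) k * Q k j := by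
      simp only [Finset.mul_sum]
      exact Finset.sum_congr rfl fun k _ => Finset.sum_congr rfl fun j _ => by ring
    rw [e3]
    exact mul_nonneg hτ.le (e2.trans (Finset.sum_le_sum fun k _ => e1 k))
  have h1 : ∑ k : Fin N, ∑ j, TT (V j) k ^ 2 ≤ ∑ k : Fin N, ∑ j, (d k * y (k, j)) ^ 2 := by
    have : ∑ k : Fin N, ∑ j, TT (V j) k ^ 2
        + 2 * ∑ k : Fin N, ∑ j, TT (V j) k * (d k * τ * Q k j)
        ≤ ∑ k : Fin N, ∑ j, (d k * y (k, j)) ^ 2 := by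
      simp only [Finset.mul_sum, ← Finset.sum_add_distrib]
      refine Finset.sum_le_sum fun k _ => Finset.sum_le_sum fun j _ => ?_
      rw [hyk]
      nlinarith [sq_nonneg (d k * τ * Q k j)]
    linarith
  have h2 : ∑ k : Fin N, ∑ j, (d k * y (k, j)) ^ 2 ≤ 9 / 4 * l2norm y ^ 2 := by
    rw [l2_sq, Fintype.sum_prod_type]
    simp only [Finset.mul_sum]
    refine Finset.sum_le_sum fun k _ => Finset.sum_le_sum fun j _ => ?_
    rw [mul_pow]
    refine mul_le_mul_of_nonneg_right ?_ (sq_nonneg _)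
    simp only [hd]
    split_ifs <;> norm_num
  have h3 : l2norm x ^ 2 ≤ (N * (N + 1) / 2 : ℝ) * ∑ k : Fin N, ∑ j, TT (V j) k ^ 2 := by
    rw [l2_sq, Fintype.sum_prod_type_right, Finset.sum_comm (f := fun (k : Fin N) j => TT (V j) k ^ 2),
      Finset.mul_sum]
    refine Finset.sum_le_sum fun j _ => ?_
    have := T_inv (V j) (sh_zero _) (sh_one _) N
    simpa only [hV, sh_add] using this
  have hN' : (3 : ℝ) ≤ N := by exact_mod_cast hN
  have h4 : l2norm x ^ 2 ≤ (N * (N + 1) / 2 : ℝ) * (9 / 4 * l2norm y ^ 2) :=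
    h3.trans (mul_le_mul_of_nonneg_left (h1.trans h2) (by positivity))
  have h5 : (N * (N + 1) / 2 : ℝ) * (9 / 4) * 2 ≤ 3 * (N : ℝ) ^ 2 := by nlinarith
  nlinarith [mul_le_mul_of_nonneg_right h5 (sq_nonneg (l2norm y))]

/-- For `𝒜 = C ⊗ I_{N_s} − τ (I_{N_t} ⊗ A)` with `A` symmetric negative semidefinite and
`T = N_t τ`: `σ_max(𝒜) ≤ 4 + τ‖A‖₂`, `σ_min(𝒜) ≥ √6/(3 N_t)`, and hence
`cond₂(𝒜) = σ_max(𝒜)/σ_min(𝒜) ≤ 2√6 N_t + (√6/2) T ‖A‖₂`. -/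
theorem stmt8 (Nt Ns : ℕ) (hNt : 3 ≤ Nt) (hNs : 1 ≤ Ns)
    (A : Matrix (Fin Ns) (Fin Ns) ℝ) (hAsymm : A.IsSymm)
    (hAnsd : ∀ z : Fin Ns → ℝ, z ⬝ᵥ (A *ᵥ z) ≤ 0)
    (τ : ℝ) (hτ : 0 < τ) (T : ℝ) (hT : T = (Nt : ℝ) * τ) :
    sigmaMax (bdf2C Nt ⊗ₖ (1 : Matrix (Fin Ns) (Fin Ns) ℝ) -
        τ • ((1 : Matrix (Fin Nt) (Fin Nt) ℝ) ⊗ₖ A)) ≤ 4 + τ * sigmaMax A ∧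
      Real.sqrt 6 / (3 * (Nt : ℝ)) ≤
        sigmaMin (bdf2C Nt ⊗ₖ (1 : Matrix (Fin Ns) (Fin Ns) ℝ) -
          τ • ((1 : Matrix (Fin Nt) (Fin Nt) ℝ) ⊗ₖ A)) ∧
      sigmaMax (bdf2C Nt ⊗ₖ (1 : Matrix (Fin Ns) (Fin Ns) ℝ) -
          τ • ((1 : Matrix (Fin Nt) (Fin Nt) ℝ) ⊗ₖ A)) /
        sigmaMin (bdf2C Nt ⊗ₖ (1 : Matrix (Fin Ns) (Fin Ns) ℝ) -
          τ • ((1 : Matrix (Fin Nt) (Fin Nt) ℝ) ⊗ₖ A)) ≤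
        2 * Real.sqrt 6 * (Nt : ℝ) + (Real.sqrt 6 / 2) * T * sigmaMax A := by
  have hNt' : (3 : ℝ) ≤ Nt := by exact_mod_cast hNt
  have h6 : Real.sqrt 6 ^ 2 = 6 := Real.sq_sqrt (by norm_num)
  have h6p : 0 < Real.sqrt 6 := Real.sqrt_pos.2 (by norm_num)
  set M := bdf2C Nt ⊗ₖ (1 : Matrix (Fin Ns) (Fin Ns) ℝ) -
        τ • ((1 : Matrix (Fin Nt) (Fin Nt) ℝ) ⊗ₖ A) with hM
  have ha := sMax_nonneg A
  have hmax : sigmaMax M ≤ 4 + τ * sigmaMax A := by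
    refine Real.sSup_le ?_ (by positivity)
    rintro c ⟨x, hx, rfl⟩
    have := up_bd A τ hτ x
    rwa [hx, mul_one] at this
  have hmin : Real.sqrt 6 / (3 * (Nt : ℝ)) ≤ sigmaMin M := by
    refine le_csInf ?_ ?_
    · refine ⟨_, Pi.single (⟨0, by omega⟩, ⟨0, by omega⟩) 1, ?_, rfl⟩
      simp [l2_eq]
    · rintro c ⟨x, hx, rfl⟩
      have h := low_bd hNt A hAsymm hAnsd τ hτ x
      rw [hx] at h
      refine abs_le_of_sq_le_sq' ?_ (l2_nonneg _) |>.2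
      rw [div_pow, h6, div_le_iff₀ (by positivity)]
      nlinarith
  refine ⟨hmax, hmin, ?_⟩
  have hp : 0 < Real.sqrt 6 / (3 * (Nt : ℝ)) := by positivity
  refine (div_le_div₀ (by positivity) hmax hp hmin).trans (le_of_eq ?_)
  rw [hT]
  field_simp
  rw [h6]
  ring
end

section
/- Let N_t ≥ 1 be an integer, let α ∈ (0,1], let θ = exp(2πi/N_t), and for n ∈ {1, …, N_t} set λ_n^{(α)} = 3/2 − 2·α^{1/N_t}·θ^{n−1} + (1/2)·α^{2/N_t}·θ^{2(n−1)} ∈ ℂ. Then Re(λ_n^{(α)}) ≥ 0 for all n, and Re(λ_n^{(α)}) = 0 holds if and only if α = 1 and n = 1; in particular, if α ∈ (0,1) then Re(λ_n^{(α)}) > 0 for all n. -/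
open Complex

/-- The eigenvalues `λ_n^{(α)} = 3/2 − 2 α^{1/N_t} θ^{n−1} + (1/2) α^{2/N_t} θ^{2(n−1)}`
of the Strang-type α-circulant BDF2 matrix, with `θ = e^{2πi/N_t}`; here the index
`n : Fin N_t` is 0-based, so `lamBDF2 Nt α n` corresponds to `λ_{n+1}^{(α)}`. -/
noncomputable def lamBDF2 (Nt : ℕ) (α : ℝ) (n : Fin Nt) : ℂ :=
  3 / 2 - 2 * ((α ^ ((1 : ℝ) / Nt) : ℝ) : ℂ) * Complex.exp (2 * Real.pi * Complex.I / Nt) ^ (n : ℕ)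
    + (1 / 2) * ((α ^ ((2 : ℝ) / Nt) : ℝ) : ℂ) *
        Complex.exp (2 * Real.pi * Complex.I / Nt) ^ (2 * (n : ℕ))

theorem lamBDF2_key (Nt : ℕ) (hNt : 1 ≤ Nt) (α : ℝ) (hα : α ∈ Set.Ioc (0 : ℝ) 1) (n : Fin Nt) :
    0 ≤ (lamBDF2 Nt α n).re ∧ ((lamBDF2 Nt α n).re = 0 ↔ α = 1 ∧ (n : ℕ) = 0) := by
  obtain ⟨h0, h1⟩ := hα
  have hN : (0 : ℝ) < Nt := by exact_mod_cast hNt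
  have hprim := Complex.isPrimitiveRoot_exp Nt (by omega)
  have hr2 : α ^ ((2 : ℝ) / Nt) = (α ^ ((1 : ℝ) / Nt)) ^ 2 := by
    rw [← Real.rpow_natCast, ← Real.rpow_mul h0.le]
    congr 1
    push_cast
    ring
  have hr0 : 0 < α ^ ((1 : ℝ) / Nt) := Real.rpow_pos_of_pos h0 _
  have hr1 : α ^ ((1 : ℝ) / Nt) ≤ 1 := Real.rpow_le_one h0.le h1 (by positivity)
  have hrα : (α ^ ((1 : ℝ) / Nt)) ^ Nt = α := by
    rw [one_div]
    exact Real.rpow_inv_natCast_pow h0.le (by omega)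
  have hw1 : ‖Complex.exp (2 * Real.pi * Complex.I / Nt) ^ (n : ℕ)‖ = 1 := by
    rw [norm_pow, hprim.norm'_eq_one (by omega), one_pow]
  have hw0 : Complex.exp (2 * Real.pi * Complex.I / Nt) ^ (n : ℕ) = 1 → (n : ℕ) = 0 := by
    intro h
    exact Nat.eq_zero_of_dvd_of_lt (hprim.dvd_of_pow_eq_one _ h) n.2
  have hn0 : (n : ℕ) = 0 → Complex.exp (2 * Real.pi * Complex.I / Nt) ^ (n : ℕ) = 1 := by
    intro h
    rw [h, pow_zero]
  have hα1 : α = 1 → α ^ ((1 : ℝ) / Nt) = 1 := by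
    rintro rfl
    exact Real.one_rpow _
  unfold lamBDF2
  rw [hr2, mul_comm 2 (n : ℕ), pow_mul]
  generalize α ^ ((1 : ℝ) / Nt) = r at *
  generalize Complex.exp (2 * Real.pi * Complex.I / Nt) ^ (n : ℕ) = w at *
  have hsq : w.re ^ 2 + w.im ^ 2 = 1 := by
    have := Complex.sq_norm w
    rw [hw1, Complex.normSq_apply] at this
    linarith
  have hre : (3 / 2 - 2 * (r : ℂ) * w + (1 / 2) * ((r ^ 2 : ℝ) : ℂ) * w ^ 2).re
      = (1 - r * w.re) ^ 2 + (1 - r ^ 2) / 2 := by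
    have e : (3 / 2 - 2 * (r : ℂ) * w + (1 / 2) * ((r ^ 2 : ℝ) : ℂ) * w ^ 2)
        = ((3 / 2 : ℝ) : ℂ) - ((2 * r : ℝ) : ℂ) * w + ((1 / 2 * r ^ 2 : ℝ) : ℂ) * (w * w) := by
      push_cast
      ring
    rw [e, Complex.add_re, Complex.sub_re, Complex.re_ofReal_mul, Complex.re_ofReal_mul,
      Complex.ofReal_re, Complex.mul_re]
    linear_combination (- r ^ 2 / 2) * hsq
  rw [hre]
  have hr : 0 ≤ 1 - r ^ 2 := by nlinarith
  refine ⟨by positivity, ?_, ?_⟩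
  · intro h
    have hs := sq_nonneg (1 - r * w.re)
    have hr' : r = 1 := by nlinarith
    subst hr'
    have hx : w.re = 1 := by
      have : (1 - 1 * w.re) ^ 2 = 0 := by linarith
      have := pow_eq_zero_iff (two_ne_zero) |>.mp this
      linarith
    have hy : w.im = 0 := by
      rw [hx] at hsq
      have : w.im ^ 2 = 0 := by linarith
      exact pow_eq_zero_iff (two_ne_zero) |>.mp this
    exact ⟨by rw [← hrα, one_pow], hw0 (Complex.ext (by simp [hx]) (by simp [hy]))⟩
  · rintro ⟨ha, hn⟩
    rw [hα1 ha, hn0 hn]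
    simp

/-- For `α ∈ (0,1]`, `Re(λ_n^{(α)}) ≥ 0` for all `n`, with equality iff `α = 1` and
`n = 1` (0-based: `n = 0`); in particular `Re(λ_n^{(α)}) > 0` for all `n` when `α < 1`. -/
theorem stmt10 (Nt : ℕ) (hNt : 1 ≤ Nt) (α : ℝ) (hα : α ∈ Set.Ioc (0 : ℝ) 1) :
    (∀ n : Fin Nt, 0 ≤ (lamBDF2 Nt α n).re) ∧
      (∀ n : Fin Nt, (lamBDF2 Nt α n).re = 0 ↔ α = 1 ∧ (n : ℕ) = 0) ∧
      (α < 1 → ∀ n : Fin Nt, 0 < (lamBDF2 Nt α n).re) := by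
  refine ⟨fun n => (lamBDF2_key Nt hNt α hα n).1, fun n => (lamBDF2_key Nt hNt α hα n).2, ?_⟩
  intro h n
  have hk := lamBDF2_key Nt hNt α hα n
  refine lt_of_le_of_ne hk.1 fun h0 => ?_
  exact h.ne (hk.2.mp h0.symm).1
end

section
/- Let N_t ≥ 3 and N_s ≥ 1 be integers, let α ∈ (0,1), let C_α be the N_t×N_t Strang-type α-circulant matrix, let A be a real symmetric negative semidefinite N_s×N_s matrix, and let τ > 0. Then the preconditioner matrix 𝒫_α = C_α ⊗ I_{N_s} − τ·(I_{N_t} ⊗ A) is invertible. -/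
open Matrix Finset Kronecker

/-- The `N_t × N_t` Strang-type α-circulant matrix `C_α` (0-based indices). -/
noncomputable def strangCalpha (Nt : ℕ) (α : ℝ) : Matrix (Fin Nt) (Fin Nt) ℝ :=
  Matrix.of fun i j =>
    if (i : ℕ) = (j : ℕ) then 3 / 2
    else if (i : ℕ) = (j : ℕ) + 1 then -2
    else if (i : ℕ) = (j : ℕ) + 2 then 1 / 2
    else if (i : ℕ) = 0 ∧ (j : ℕ) = Nt - 2 then α / 2
    else if (i : ℕ) = 0 ∧ (j : ℕ) = Nt - 1 then -2 * α
    else if (i : ℕ) = 1 ∧ (j : ℕ) = Nt - 1 then α / 2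
    else 0

lemma strang_row (Nt : ℕ) (hNt : 3 ≤ Nt) (α : ℝ) (x : Fin Nt → ℝ) (w : ℕ → ℝ)
    (h0 : w 0 = α * x ⟨Nt - 2, by omega⟩) (h1 : w 1 = α * x ⟨Nt - 1, by omega⟩)
    (h2 : ∀ i : Fin Nt, w (i + 2) = x i) (i : Fin Nt) :
    ∑ j, strangCalpha Nt α i j * x j = 3 / 2 * w (i + 2) - 2 * w (i + 1) + 1 / 2 * w i := by
  have key : ∀ (p q : Fin Nt) (c d : ℝ),
      (∀ j, strangCalpha Nt α i j = (if j = i then 3 / 2 else 0) + (if j = p then c else 0)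
        + (if j = q then d else 0)) →
      ∑ j, strangCalpha Nt α i j * x j = 3 / 2 * x i + c * x p + d * x q := by
    intro p q c d h
    simp [h, add_mul, Finset.sum_add_distrib, ite_mul]
  obtain ⟨i, hi⟩ := i
  have e2 := h2 ⟨i, hi⟩
  simp only at e2 ⊢
  rw [e2]
  match i, hi with
  | 0, hi =>
    rw [key ⟨Nt - 1, by omega⟩ ⟨Nt - 2, by omega⟩ (-2 * α) (α / 2) ?_, h0, h1]
    · ring
    · rintro ⟨j, hj⟩
      simp only [strangCalpha, Matrix.of_apply, Fin.mk.injEq]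
      split_ifs <;> first | omega | (exfalso; tauto) | simp
  | 1, hi =>
    have e1 := h2 ⟨0, by omega⟩
    simp only at e1
    rw [key ⟨0, by omega⟩ ⟨Nt - 1, by omega⟩ (-2) (α / 2) ?_, h1, e1]
    · ring
    · rintro ⟨j, hj⟩
      simp only [strangCalpha, Matrix.of_apply, Fin.mk.injEq]
      split_ifs <;> first | omega | (exfalso; tauto) | simp
  | k + 2, hi =>
    have e1 := h2 ⟨k + 1, by omega⟩
    have e0 := h2 ⟨k, by omega⟩
    simp only at e1 e0
    rw [key ⟨k + 1, by omega⟩ ⟨k, by omega⟩ (-2) (1 / 2) ?_, e0, show k + 2 + 1 = k + 1 + 2 from rfl, e1]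
    · ring
    · rintro ⟨j, hj⟩
      simp only [strangCalpha, Matrix.of_apply, Fin.mk.injEq]
      split_ifs <;> first | omega | (exfalso; tauto) | simp

/-- For `α ∈ (0,1)`, `A` real symmetric negative semidefinite and `τ > 0`, the
preconditioner `𝒫_α = C_α ⊗ I_{N_s} − τ (I_{N_t} ⊗ A)` is invertible. -/
theorem stmt13 (Nt Ns : ℕ) (hNt : 3 ≤ Nt) (hNs : 1 ≤ Ns) (α : ℝ)
    (hα : α ∈ Set.Ioo (0 : ℝ) 1)
    (A : Matrix (Fin Ns) (Fin Ns) ℝ) (hAsymm : A.IsSymm)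
    (hAnsd : ∀ z : Fin Ns → ℝ, z ⬝ᵥ (A *ᵥ z) ≤ 0)
    (τ : ℝ) (hτ : 0 < τ) :
    IsUnit (strangCalpha Nt α ⊗ₖ (1 : Matrix (Fin Ns) (Fin Ns) ℝ) -
      τ • ((1 : Matrix (Fin Nt) (Fin Nt) ℝ) ⊗ₖ A)) := by
  obtain ⟨ha0, ha1⟩ := hα
  rw [← Matrix.mulVec_injective_iff_isUnit]
  rw [← Matrix.coe_mulVecLin, ← LinearMap.ker_eq_bot, LinearMap.ker_eq_bot']
  intro V hV
  rw [Matrix.mulVecLin_apply] at hV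
  let W : ℕ → Fin Ns → ℝ := fun k a =>
    if k = 0 then α * V (⟨Nt - 2, by omega⟩, a)
    else if k = 1 then α * V (⟨Nt - 1, by omega⟩, a)
    else if h : k - 2 < Nt then V (⟨k - 2, h⟩, a) else 0
  have W2 : ∀ (i : Fin Nt) a, W (i + 2) a = V (i, a) := by
    intro i a
    simp [W]
  have W0 : ∀ a, W 0 a = α * V (⟨Nt - 2, by omega⟩, a) := fun a => by simp [W]
  have W1 : ∀ a, W 1 a = α * V (⟨Nt - 1, by omega⟩, a) := fun a => by simp [W]
  have B0 : ∀ a, W 0 a = α * W Nt a := by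
    intro a
    rw [W0, ← W2]
    simp only
    rw [Nat.sub_add_cancel (by omega)]
  have B1 : ∀ a, W 1 a = α * W (Nt + 1) a := by
    intro a
    rw [W1, ← W2]
    simp only
    rw [show Nt - 1 + 2 = Nt + 1 by omega]
  have row : ∀ (i : Fin Nt) a, 3 / 2 * W (i + 2) a - 2 * W (i + 1) a + 1 / 2 * W i a
      = τ * (A *ᵥ W (i + 2)) a := by
    intro i a
    have h := congrFun hV (i, a)
    rw [← strang_row Nt hNt α (fun j => V (j, a)) (fun k => W k a) (W0 a) (W1 a)
      (fun j => W2 j a) i]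
    have hw : W (i + 2) = fun b => V (i, b) := funext (W2 i)
    rw [hw]
    rw [Matrix.sub_mulVec, Matrix.smul_mulVec, Pi.sub_apply, Pi.smul_apply] at h
    simp only [Matrix.mulVec, dotProduct, Fintype.sum_prod_type] at h ⊢
    simp [Matrix.one_apply, ite_mul] at h
    linarith
  let g : ℕ → ℝ := fun k => ∑ a, (W (k + 1) a ^ 2 + (2 * W (k + 1) a - W k a) ^ 2)
  have step : ∀ k, k < Nt → g (k + 1) ≤ g k := by
    intro k hk
    have hA := hAnsd (W (k + 2))
    have h1 : ∑ a, 4 * (W (k + 2) a * (3 / 2 * W (k + 2) a - 2 * W (k + 1) a + 1 / 2 * W k a))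
        = 4 * τ * (W (k + 2) ⬝ᵥ (A *ᵥ W (k + 2))) := by
      rw [dotProduct, Finset.mul_sum]
      refine Finset.sum_congr rfl fun a _ => ?_
      have := row ⟨k, hk⟩ a
      simp only at this
      rw [this]
      ring
    have h2 : g (k + 1) - g k ≤
        ∑ a, 4 * (W (k + 2) a * (3 / 2 * W (k + 2) a - 2 * W (k + 1) a + 1 / 2 * W k a)) := by
      simp only [g]
      rw [← Finset.sum_sub_distrib]
      refine Finset.sum_le_sum fun a _ => ?_
      rw [show k + 1 + 1 = k + 2 from rfl]
      nlinarith [sq_nonneg (W (k + 2) a - 2 * W (k + 1) a + W k a)]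
    have h3 : 4 * τ * (W (k + 2) ⬝ᵥ (A *ᵥ W (k + 2))) ≤ 0 :=
      mul_nonpos_of_nonneg_of_nonpos (by positivity) hA
    linarith
  have anti : ∀ k, k ≤ Nt → g k ≤ g 0 := by
    intro k
    induction k with
    | zero => intro _; exact le_rfl
    | succ k ih => intro hk; exact (step k (by omega)).trans (ih (by omega))
  have g0 : g 0 = α ^ 2 * g Nt := by
    simp only [g]
    rw [Finset.mul_sum]
    refine Finset.sum_congr rfl fun a _ => ?_
    rw [zero_add, B0, B1]
    ring
  have gN := anti Nt le_rfl
  have hg0 : g 0 ≤ 0 := by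
    have : α ^ 2 < 1 := by nlinarith
    have : g Nt ≤ 0 := by nlinarith
    rw [g0]
    exact mul_nonpos_of_nonneg_of_nonpos (by positivity) this
  funext ⟨i, a⟩
  have hi := (anti (i + 1) i.2).trans hg0
  have hle : W (i + 2) a ^ 2 + (2 * W (i + 2) a - W (i + 1) a) ^ 2 ≤ g (i + 1) :=
    Finset.single_le_sum (f := fun a => W (i + 2) a ^ 2 + (2 * W (i + 2) a - W (i + 1) a) ^ 2)
      (fun b _ => by positivity) (Finset.mem_univ a)
  have : W (i + 2) a ^ 2 = 0 := by
    nlinarith [sq_nonneg (W (i + 2) a), sq_nonneg (2 * W (i + 2) a - W (i + 1) a)]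
  rw [← W2]
  simpa using this
end

section
/- Let N_t ≥ 3 and N_s ≥ 1 be integers, let α ∈ (0,1), let C be the N_t×N_t BDF2 all-at-once time-stepping matrix, let C_α be the N_t×N_t Strang-type α-circulant matrix, let A be a real symmetric negative semidefinite N_s×N_s matrix, let τ > 0, and set 𝒜 = C ⊗ I_{N_s} − τ·(I_{N_t} ⊗ A) and 𝒫_α = C_α ⊗ I_{N_s} − τ·(I_{N_t} ⊗ A). Then 𝒫_α⁻¹𝒜 = I + ℒ where ℒ = 𝒫_α⁻¹·((C − C_α) ⊗ I_{N_s}), the matrix C − C_α has rank 2, and rank(ℒ) = 2·N_s. -/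
open Matrix Finset Kronecker

lemma aux_rank {ι κ : Type*} [Fintype ι] [Fintype κ] [DecidableEq ι] [DecidableEq κ]
    (D : Matrix ι ι ℝ) (E : Matrix ι κ ℝ) (F : Matrix κ ι ℝ) (E' : Matrix κ ι ℝ)
    (G : Matrix ι κ ℝ) (h : D = E * F) (hE : E' * E = 1) (hF : F * G = 1) :
    D.rank = Fintype.card κ := by
  apply le_antisymm
  · rw [h]
    exact (Matrix.rank_mul_le_left _ _).trans (Matrix.rank_le_card_width _)
  · have h1 : E' * D * G = 1 := by
      rw [h, ← Matrix.mul_assoc, hE, Matrix.one_mul, hF]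
    calc Fintype.card κ = (1 : Matrix κ κ ℝ).rank := Matrix.rank_one.symm
      _ = (E' * D * G).rank := by rw [h1]
      _ ≤ (E' * D).rank := Matrix.rank_mul_le_left _ _
      _ ≤ D.rank := Matrix.rank_mul_le_right _ _

lemma aux_fact (m : ℕ) (α : ℝ) (hα : 0 < α) :
    ∃ (E : Matrix (Fin (m+3)) (Fin 2) ℝ) (F : Matrix (Fin 2) (Fin (m+3)) ℝ)
      (E' : Matrix (Fin 2) (Fin (m+3)) ℝ) (G : Matrix (Fin (m+3)) (Fin 2) ℝ),
      bdf2C (m+3) - strangCalpha (m+3) α = E * F ∧ E' * E = 1 ∧ F * G = 1 := by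
  refine ⟨Matrix.of fun i k => if (i : ℕ) = (k : ℕ) then 1 else 0,
    Matrix.of fun k j => (bdf2C (m+3) - strangCalpha (m+3) α) (Fin.castLE (by omega) k) j,
    Matrix.of fun k i => if i = Fin.castLE (by omega) k then 1 else 0,
    Matrix.of fun j k => (if j = 0 then (if k = 0 then -2 else -8) else 0) +
      (if j = Fin.last (m+2) then (if k = 0 then 0 else -2/α) else 0), ?_, ?_, ?_⟩
  · ext i j
    simp only [Matrix.mul_apply, Matrix.of_apply, Fin.sum_univ_two]
    by_cases h0 : (i : ℕ) = 0
    · have : i = 0 := Fin.ext h0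
      subst this
      simp
    · by_cases h1 : (i : ℕ) = 1
      · have : i = 1 := Fin.ext h1
        subst this
        simp
        rfl
      · have h0' : i ≠ 0 := fun h => h0 (by rw [h]; rfl)
        simp [h0', h1, bdf2C, strangCalpha]
  · ext k l
    simp only [Matrix.mul_apply, Matrix.of_apply, ite_mul, one_mul, zero_mul]
    rw [Finset.sum_ite_eq']
    simp [Matrix.one_apply, Fin.ext_iff]
  · ext k l
    simp only [Matrix.mul_apply, Matrix.of_apply, mul_add, mul_ite, mul_zero,
      Finset.sum_add_distrib, Finset.sum_ite_eq', Finset.mem_univ, if_true]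
    have e1 : (Fin.castLE (by omega) (1 : Fin 2) : Fin (m+3)) = 1 := rfl
    fin_cases k <;> fin_cases l <;> simp [bdf2C, strangCalpha, e1] <;> field_simp <;> norm_num

lemma aux_sub_one (m : ℕ) (i : Fin (m+3)) :
    ((i - 1 : Fin (m+3)) : ℕ) = if (i : ℕ) = 0 then m + 2 else (i : ℕ) - 1 := by
  rcases i with ⟨i, hi⟩
  simp only [Fin.sub_def, Fin.val_one]
  split_ifs with h
  · subst h; simp
  · rw [show m + 3 - 1 + i = (i - 1) + (m + 3) by omega, Nat.add_mod_right,
      Nat.mod_eq_of_lt (by omega)]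

lemma aux_strang (m : ℕ) (α : ℝ) (i j : Fin (m+3)) :
    strangCalpha (m+3) α i j = (if j = i then 3/2 else 0)
      + (if j = i - 1 then -2 * (if (i : ℕ) = 0 then α else 1) else 0)
      + (if j = i - 1 - 1 then (if (i : ℕ) ≤ 1 then α else 1) / 2 else 0) := by
  have h1 := aux_sub_one m i
  have h2 := aux_sub_one m (i - 1)
  simp only [strangCalpha, Matrix.of_apply, Fin.ext_iff]
  rw [h2, h1]
  have hi := i.2
  have hj := j.2
  split_ifs <;> first | omega | ring1 | (exfalso; omega)

lemma aux_inj_s14 (m Ns : ℕ) (α : ℝ) (hα : α ∈ Set.Ioo (0 : ℝ) 1)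
    (A : Matrix (Fin Ns) (Fin Ns) ℝ)
    (hAnsd : ∀ z : Fin Ns → ℝ, z ⬝ᵥ (A *ᵥ z) ≤ 0)
    (τ : ℝ) (hτ : 0 < τ) (x : Fin (m+3) × Fin Ns → ℝ)
    (hx : (strangCalpha (m+3) α ⊗ₖ (1 : Matrix (Fin Ns) (Fin Ns) ℝ) -
          τ • ((1 : Matrix (Fin (m+3)) (Fin (m+3)) ℝ) ⊗ₖ A)) *ᵥ x = 0) : x = 0 := by
  obtain ⟨hα0, hα1⟩ := hα
  obtain ⟨γ, hγ0, hγ1, hγ⟩ : ∃ γ : ℝ, 0 < γ ∧ γ < 1 ∧ γ ^ (m+3) = α := by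
    refine ⟨α ^ ((1:ℝ) / ((m+3 : ℕ) : ℝ)), by positivity,
      Real.rpow_lt_one hα0.le hα1 (by positivity), ?_⟩
    rw [one_div]
    exact Real.rpow_inv_natCast_pow hα0.le (by omega)
  have hc : ∀ n s, 3/2 * x (n, s) + (-2 * (if (n : ℕ) = 0 then α else 1)) * x (n-1, s)
      + ((if (n : ℕ) ≤ 1 then α else 1) / 2) * x (n-1-1, s)
      - τ * ∑ t, A s t * x (n, t) = 0 := by
    intro n s
    have := congrFun hx (n, s)
    rw [Matrix.sub_mulVec, Matrix.smul_mulVec] at this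
    simp only [Pi.sub_apply, Pi.smul_apply, Pi.zero_apply,
      Matrix.mulVec, dotProduct, Fintype.sum_prod_type, Matrix.kroneckerMap_apply, smul_eq_mul] at this
    rw [← this]
    congr 1
    · simp only [aux_strang, Matrix.one_apply, mul_ite, mul_one, mul_zero, ite_mul, zero_mul,
        Finset.sum_ite_eq, Finset.mem_univ, if_true, add_mul, Finset.sum_add_distrib,
        Finset.sum_ite_eq']
    · congr 1
      rw [Finset.sum_eq_single n]
      · simp
      · intro b _ hb
        simp [Matrix.one_apply, hb.symm]
      · simp
  set y : Fin (m+3) → Fin Ns → ℝ := fun n s => γ ^ (n : ℕ) * x (n, s) with hy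
  have hg1 : ∀ n : Fin (m+3), γ ^ (n : ℕ) * (if (n : ℕ) = 0 then α else 1)
      = γ * γ ^ ((n - 1 : Fin (m+3)) : ℕ) := by
    intro n
    rw [aux_sub_one]
    split_ifs with h
    · rw [h, ← hγ]; ring
    · obtain ⟨k, hk⟩ := Nat.exists_eq_succ_of_ne_zero h
      rw [hk, pow_succ, Nat.succ_sub_one]; ring
  have hg2 : ∀ n : Fin (m+3), γ ^ (n : ℕ) * (if (n : ℕ) ≤ 1 then α else 1)
      = γ ^ 2 * γ ^ ((n - 1 - 1 : Fin (m+3)) : ℕ) := by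
    intro n
    have e : (if (n : ℕ) ≤ 1 then α else 1) = (if (n : ℕ) = 0 then α else 1) *
        (if ((n - 1 : Fin (m+3)) : ℕ) = 0 then α else 1) := by
      rw [aux_sub_one]
      split_ifs <;> first | omega | (exfalso; omega) | simp
    rw [e, ← mul_assoc, hg1, mul_assoc, hg1]; ring
  have hcy : ∀ n s, 3/2 * y n s - 2 * γ * y (n-1) s + γ^2/2 * y (n-1-1) s
      - τ * ∑ t, A s t * y n t = 0 := by
    intro n s
    have h := hc n s
    have e : ∑ t, A s t * y n t = γ ^ (n:ℕ) * ∑ t, A s t * x (n, t) := by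
      rw [Finset.mul_sum]
      refine Finset.sum_congr rfl fun t _ => ?_
      simp only [hy]; ring
    rw [e]
    simp only [hy]
    linear_combination (γ ^ (n:ℕ)) * h + 2 * x (n-1, s) * hg1 n - x (n-1-1, s) / 2 * hg2 n
  have hsh : ∀ f : Fin (m+3) → ℝ, ∑ n, f (n - 1) = ∑ n, f n := fun f =>
    Equiv.sum_comp (Equiv.subRight (1 : Fin (m+3))) f
  have hA : ∑ n, ∑ s, y n s * ∑ t, A s t * y n t ≤ 0 :=
    Finset.sum_nonpos fun n _ => hAnsd (y n)
  have hE : ∑ n, ∑ s, (y n s * (3/2 * y n s - 2 * γ * y (n-1) s + γ^2/2 * y (n-1-1) s)) =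
      τ * ∑ n, ∑ s, y n s * ∑ t, A s t * y n t := by
    simp only [Finset.mul_sum (s := (Finset.univ : Finset (Fin (m+3)))) (a := τ),
      Finset.mul_sum (s := (Finset.univ : Finset (Fin Ns))) (a := τ)]
    refine Finset.sum_congr rfl fun n _ => Finset.sum_congr rfl fun s _ => ?_
    linear_combination (y n s) * hcy n s
  have hS : ∀ s, (1 - γ^2)/2 * ∑ n, y n s ^ 2 ≤
      ∑ n, (y n s * (3/2 * y n s - 2 * γ * y (n-1) s + γ^2/2 * y (n-1-1) s)) := by
    intro s
    have hp : 0 ≤ ∑ n, (y (n-1) s - γ/2 * (y n s + y (n-1-1) s))^2 :=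
      Finset.sum_nonneg fun n _ => sq_nonneg _
    have a1 := hsh (fun n => y n s ^ 2)
    have a2 := hsh (fun n => y (n-1) s ^ 2)
    have a3 := hsh (fun n => y n s * y (n-1) s)
    have key : ∑ n, (y n s * (3/2 * y n s - 2 * γ * y (n-1) s + γ^2/2 * y (n-1-1) s))
        = (1 - γ^2)/2 * ∑ n, y n s ^ 2 +
        ∑ n, (y (n-1) s - γ/2 * (y n s + y (n-1-1) s))^2 := by
      have l : ∑ n, (y n s * (3/2 * y n s - 2 * γ * y (n-1) s + γ^2/2 * y (n-1-1) s))
        = 3/2 * ∑ n, y n s ^ 2 - 2 * γ * ∑ n, y n s * y (n-1) s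
          + γ^2/2 * ∑ n, y n s * y (n-1-1) s := by
        simp only [Finset.mul_sum, ← Finset.sum_sub_distrib, ← Finset.sum_add_distrib]
        exact Finset.sum_congr rfl fun n _ => by ring
      have r : ∑ n, (y (n-1) s - γ/2 * (y n s + y (n-1-1) s))^2
        = ∑ n, y (n-1) s ^ 2 - γ * ∑ n, y n s * y (n-1) s - γ * ∑ n, y (n-1) s * y (n-1-1) s
          + γ^2/4 * ∑ n, y n s ^ 2 + γ^2/4 * ∑ n, y (n-1-1) s ^ 2
          + γ^2/2 * ∑ n, y n s * y (n-1-1) s := by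
        simp only [Finset.mul_sum, ← Finset.sum_sub_distrib, ← Finset.sum_add_distrib]
        exact Finset.sum_congr rfl fun n _ => by ring
      rw [l, r]
      rw [a3, a2, a1]; ring
    rw [key]; linarith
  have hY : (1 - γ^2)/2 * ∑ s, ∑ n, y n s ^ 2 ≤ 0 := by
    calc _ = ∑ s, (1 - γ^2)/2 * ∑ n, y n s ^ 2 := by rw [Finset.mul_sum]
      _ ≤ _ := Finset.sum_le_sum fun s _ => hS s
      _ = _ := Finset.sum_comm
      _ = _ := hE
      _ ≤ 0 := mul_nonpos_of_nonneg_of_nonpos hτ.le hA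
  have hpos : 0 < (1 - γ^2)/2 := by nlinarith
  have hY0 : ∑ s, ∑ n, y n s ^ 2 = 0 :=
    le_antisymm (by by_contra hh; push Not at hh; nlinarith [mul_pos hpos hh])
      (Finset.sum_nonneg fun s _ => Finset.sum_nonneg fun n _ => sq_nonneg _)
  funext ⟨n, s⟩
  have h1 := (Finset.sum_eq_zero_iff_of_nonneg
    (fun s _ => Finset.sum_nonneg fun n _ => sq_nonneg _)).1 hY0 s (Finset.mem_univ _)
  have h2 := (Finset.sum_eq_zero_iff_of_nonneg (fun n _ => sq_nonneg _)).1 h1 n (Finset.mem_univ _)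
  have h3 : y n s = 0 := by simpa using h2
  simp only [hy, mul_eq_zero] at h3
  exact h3.resolve_left (by positivity)

/-- With `𝒜 = C ⊗ I − τ(I ⊗ A)`, `𝒫_α = C_α ⊗ I − τ(I ⊗ A)` and
`ℒ = 𝒫_α⁻¹ ((C − C_α) ⊗ I)`, one has `𝒫_α⁻¹ 𝒜 = I + ℒ`, `rank(C − C_α) = 2` and
`rank(ℒ) = 2 N_s`. -/
theorem stmt14 (Nt Ns : ℕ) (hNt : 3 ≤ Nt) (hNs : 1 ≤ Ns) (α : ℝ)
    (hα : α ∈ Set.Ioo (0 : ℝ) 1)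
    (A : Matrix (Fin Ns) (Fin Ns) ℝ) (hAsymm : A.IsSymm)
    (hAnsd : ∀ z : Fin Ns → ℝ, z ⬝ᵥ (A *ᵥ z) ≤ 0)
    (τ : ℝ) (hτ : 0 < τ) :
    (strangCalpha Nt α ⊗ₖ (1 : Matrix (Fin Ns) (Fin Ns) ℝ) -
          τ • ((1 : Matrix (Fin Nt) (Fin Nt) ℝ) ⊗ₖ A))⁻¹ *
        (bdf2C Nt ⊗ₖ (1 : Matrix (Fin Ns) (Fin Ns) ℝ) -
          τ • ((1 : Matrix (Fin Nt) (Fin Nt) ℝ) ⊗ₖ A)) =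
      1 + (strangCalpha Nt α ⊗ₖ (1 : Matrix (Fin Ns) (Fin Ns) ℝ) -
            τ • ((1 : Matrix (Fin Nt) (Fin Nt) ℝ) ⊗ₖ A))⁻¹ *
          ((bdf2C Nt - strangCalpha Nt α) ⊗ₖ (1 : Matrix (Fin Ns) (Fin Ns) ℝ)) ∧
    (bdf2C Nt - strangCalpha Nt α).rank = 2 ∧
    ((strangCalpha Nt α ⊗ₖ (1 : Matrix (Fin Ns) (Fin Ns) ℝ) -
          τ • ((1 : Matrix (Fin Nt) (Fin Nt) ℝ) ⊗ₖ A))⁻¹ *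
        ((bdf2C Nt - strangCalpha Nt α) ⊗ₖ (1 : Matrix (Fin Ns) (Fin Ns) ℝ))).rank =
      2 * Ns := by
  obtain ⟨m, rfl⟩ : ∃ m, Nt = m + 3 := ⟨Nt - 3, by omega⟩
  have hdet : IsUnit (strangCalpha (m+3) α ⊗ₖ (1 : Matrix (Fin Ns) (Fin Ns) ℝ) -
          τ • ((1 : Matrix (Fin (m+3)) (Fin (m+3)) ℝ) ⊗ₖ A)).det := by
    rw [isUnit_iff_ne_zero]
    intro h0
    obtain ⟨v, hv, hv0⟩ := Matrix.exists_mulVec_eq_zero_iff.2 h0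
    exact hv (aux_inj_s14 m Ns α hα A hAnsd τ hτ v hv0)
  obtain ⟨E, F, E', G, h, hE, hF⟩ := aux_fact m α hα.1
  have hk : (bdf2C (m+3) - strangCalpha (m+3) α) ⊗ₖ (1 : Matrix (Fin Ns) (Fin Ns) ℝ) =
      bdf2C (m+3) ⊗ₖ (1 : Matrix (Fin Ns) (Fin Ns) ℝ) -
      strangCalpha (m+3) α ⊗ₖ (1 : Matrix (Fin Ns) (Fin Ns) ℝ) := by
    ext ⟨i, s⟩ ⟨j, t⟩
    simp [Matrix.kronecker_apply, sub_mul]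
  refine ⟨?_, ?_, ?_⟩
  · rw [hk]
    rw [← Matrix.nonsing_inv_mul _ hdet, ← Matrix.mul_add]
    congr 1
    abel
  · simpa using aux_rank _ E F E' G h hE hF
  · rw [Matrix.rank_mul_eq_right_of_isUnit_det _ _
      (Matrix.isUnit_nonsing_inv_det _ hdet)]
    have := aux_rank ((bdf2C (m+3) - strangCalpha (m+3) α) ⊗ₖ (1 : Matrix (Fin Ns) (Fin Ns) ℝ))
      (E ⊗ₖ (1 : Matrix (Fin Ns) (Fin Ns) ℝ)) (F ⊗ₖ (1 : Matrix (Fin Ns) (Fin Ns) ℝ))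
      (E' ⊗ₖ (1 : Matrix (Fin Ns) (Fin Ns) ℝ)) (G ⊗ₖ (1 : Matrix (Fin Ns) (Fin Ns) ℝ))
      (by rw [← Matrix.mul_kronecker_mul, h, Matrix.one_mul])
      (by rw [← Matrix.mul_kronecker_mul, hE, Matrix.one_mul, Matrix.one_kronecker_one])
      (by rw [← Matrix.mul_kronecker_mul, hF, Matrix.one_mul, Matrix.one_kronecker_one])
    simpa using this
end

section
/- Let γ ∈ (1,2) and for ℓ ∈ ℤ define the fractional centred difference coefficients ω_ℓ^{(γ)} = (−1)^ℓ·Γ(1+γ)/(Γ(1+γ/2−ℓ)·Γ(1+γ/2+ℓ)), where Γ is the real Gamma function. Then: (i) ω_0^{(γ)} > 0; (ii) ω_{−ℓ}^{(γ)} = ω_ℓ^{(γ)} for all ℓ ∈ ℤ; and (iii) ω_ℓ^{(γ)} < 0 for every ℓ with |ℓ| ≥ 1. -/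
open Real

/-- The fractional centred difference coefficients
`ω_ℓ^{(γ)} = (−1)^ℓ Γ(1+γ) / (Γ(1+γ/2−ℓ) Γ(1+γ/2+ℓ))`, `ℓ ∈ ℤ`,
where `Γ` is the real Gamma function. -/
noncomputable def omegaFCD (γ : ℝ) (l : ℤ) : ℝ :=
  (-1 : ℝ) ^ l * Real.Gamma (1 + γ) /
    (Real.Gamma (1 + γ / 2 - l) * Real.Gamma (1 + γ / 2 + l))

theorem gamma_alt_pos (a : ℝ) (h0 : 0 < a) (h1 : a < 1) (n : ℕ) :
    0 < (-1 : ℝ) ^ n * Real.Gamma (a - n) := by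
  induction n with
  | zero => simpa using Real.Gamma_pos_of_pos h0
  | succ k ih =>
    have hk : (0 : ℝ) ≤ k := Nat.cast_nonneg k
    have hneg : a - ((k + 1 : ℕ) : ℝ) < 0 := by push_cast; linarith
    have h := Real.Gamma_add_one hneg.ne
    have e : a - ((k + 1 : ℕ) : ℝ) + 1 = a - k := by push_cast; ring
    rw [e] at h
    rw [h] at ih
    rw [pow_succ]
    by_contra hc
    push Not at hc
    nlinarith [mul_nonneg_of_nonpos_of_nonpos hneg.le hc]

theorem omegaFCD_symm (γ : ℝ) (l : ℤ) : omegaFCD γ (-l) = omegaFCD γ l := by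
  unfold omegaFCD
  have e : (-1 : ℝ) ^ (-l) = (-1 : ℝ) ^ l := by
    rw [zpow_neg, ← inv_zpow]; norm_num
  rw [e, mul_comm (Real.Gamma (1 + γ / 2 - ((-l : ℤ) : ℝ)))]
  push_cast
  rw [sub_neg_eq_add, ← sub_eq_add_neg]

theorem omegaFCD_succ_neg (γ : ℝ) (hγ : γ ∈ Set.Ioo (1 : ℝ) 2) (n : ℕ) :
    omegaFCD γ ((n + 1 : ℕ) : ℤ) < 0 := by
  obtain ⟨h1, h2⟩ := hγ
  have hn : (0 : ℝ) ≤ n := Nat.cast_nonneg n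
  have hp := gamma_alt_pos (γ / 2) (by linarith) (by linarith) n
  have g1 : 0 < Real.Gamma (1 + γ) := Real.Gamma_pos_of_pos (by linarith)
  have g2 : 0 < Real.Gamma (1 + γ / 2 + ((n : ℝ) + 1)) :=
    Real.Gamma_pos_of_pos (by linarith)
  unfold omegaFCD
  rw [zpow_natCast]
  push_cast
  rw [show 1 + γ / 2 - ((n : ℝ) + 1) = γ / 2 - n by ring, pow_succ]
  rcases neg_one_pow_eq_or ℝ n with h | h
  · rw [h] at hp ⊢
    exact div_neg_of_neg_of_pos (by linarith) (mul_pos (by linarith) g2)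
  · rw [h] at hp ⊢
    exact div_neg_of_pos_of_neg (by linarith) (mul_neg_of_neg_of_pos (by linarith) g2)

/-- For `γ ∈ (1,2)`: (i) `ω_0^{(γ)} > 0`; (ii) `ω_{−ℓ}^{(γ)} = ω_ℓ^{(γ)}` for all `ℓ`;
(iii) `ω_ℓ^{(γ)} < 0` for every `ℓ` with `|ℓ| ≥ 1`. -/
theorem stmt17 (γ : ℝ) (hγ : γ ∈ Set.Ioo (1 : ℝ) 2) :
    0 < omegaFCD γ 0 ∧
      (∀ l : ℤ, omegaFCD γ (-l) = omegaFCD γ l) ∧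
      (∀ l : ℤ, 1 ≤ |l| → omegaFCD γ l < 0) := by
  have hpos : ∀ l : ℤ, 1 ≤ l → omegaFCD γ l < 0 := by
    intro l hl
    obtain ⟨n, rfl⟩ : ∃ n : ℕ, l = ((n + 1 : ℕ) : ℤ) := ⟨(l - 1).toNat, by omega⟩
    exact omegaFCD_succ_neg γ hγ n
  refine ⟨?_, omegaFCD_symm γ, ?_⟩
  · obtain ⟨h1, h2⟩ := hγ
    have g1 : 0 < Real.Gamma (1 + γ) := Real.Gamma_pos_of_pos (by linarith)
    have g2 : 0 < Real.Gamma (1 + γ / 2) := Real.Gamma_pos_of_pos (by linarith)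
    simp only [omegaFCD, zpow_zero, Int.cast_zero, sub_zero, add_zero, one_mul]
    positivity
  · intro l hl
    rcases le_abs.mp hl with h | h
    · exact hpos l h
    · rw [← omegaFCD_symm]
      exact hpos _ h
end
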